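/- arXiv:2512.13229 — 2 statements merged into one kernel-verified Lean document; each statement's English description precedes it below -/
import Mathlib

section
/- Let P be a symmetric positive definite n×n matrix, W_ω, W_v, P̄_e, Π symmetric positive definite matrices of sizes p, q, m, s, and α, β_ω, β_v, β_e, β_r ≥ 0. Define the symmetric block matrix 𝓜 of size n+p+q+m+s+1 with (1,1) block Aᵀ P + P A, (2,1) block Gᵀ P, (3,1) block B_vᵀ P, (4,1) block B_eᵀ P, (5,1) block B_rᵀ P, and all other blocks zero; 𝓝 = diag(P, 0, 0, 0, 0, −1); S_ω = diag(0, −W_ω, 0, 0, 0, 1); S_v = diag(0, 0, −W_v, 0, 0, 1); S_e = diag(0, 0, 0, −P̄_e, 0, 1); S_r = diag(0, 0, 0, 0, −Π, 1). If −𝓜 − α 𝓝 − β_ω S_ω − β_v S_v − β_e S_e − β_r S_r is positive semidefinite, then for every ζ ∈ ℝⁿ and all vectors ω, v, ē, r with ωᵀ W_ω ω ≤ 1, vᵀ W_v v ≤ 1, ēᵀ P̄_e ē ≤ 1, rᵀ Π r ≤ 1, it holds that 2 ζᵀ P (A ζ + G ω + B_v v + B_e ē + B_r r) ≤ α (1 −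 ζᵀ P ζ). -/
open Matrix MeasureTheory Filter

/-- Index type for the stacked vector κ = (ζ, ω, v, ē, r, 1). -/
abbrev Idx (n p q m s : ℕ) := Fin n ⊕ Fin p ⊕ Fin q ⊕ Fin m ⊕ Fin s ⊕ Fin 1

noncomputable section

variable {n p q m s : ℕ}

/-- The stacked vector κ = (ζ, ω, v, ē, r, 1). -/
def stack (z : Fin n → ℝ) (w : Fin p → ℝ) (v : Fin q → ℝ) (e : Fin m → ℝ)
    (r : Fin s → ℝ) : Idx n p q m s → ℝ :=
  Sum.elim z (Sum.elim w (Sum.elim v (Sum.elim e (Sum.elim r (fun _ => 1)))))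

/-- The symmetric block matrix 𝓜 with (1,1) block Aᵀ P + P A and
(2,1),(3,1),(4,1),(5,1) blocks GᵀP, Bvᵀ P, Beᵀ P, Brᵀ P, all other blocks zero. -/
def bigM (P A : Matrix (Fin n) (Fin n) ℝ) (G : Matrix (Fin n) (Fin p) ℝ)
    (Bv : Matrix (Fin n) (Fin q) ℝ) (Be : Matrix (Fin n) (Fin m) ℝ)
    (Br : Matrix (Fin n) (Fin s) ℝ) : Matrix (Idx n p q m s) (Idx n p q m s) ℝ :=
  Matrix.of fun i j => match i, j with
  | Sum.inl i, Sum.inl j => (Aᵀ * P + P * A) i j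
  | Sum.inl i, Sum.inr (Sum.inl j) => (P * G) i j
  | Sum.inr (Sum.inl i), Sum.inl j => (Gᵀ * P) i j
  | Sum.inl i, Sum.inr (Sum.inr (Sum.inl j)) => (P * Bv) i j
  | Sum.inr (Sum.inr (Sum.inl i)), Sum.inl j => (Bvᵀ * P) i j
  | Sum.inl i, Sum.inr (Sum.inr (Sum.inr (Sum.inl j))) => (P * Be) i j
  | Sum.inr (Sum.inr (Sum.inr (Sum.inl i))), Sum.inl j => (Beᵀ * P) i j
  | Sum.inl i, Sum.inr (Sum.inr (Sum.inr (Sum.inr (Sum.inl j)))) => (P * Br) i j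
  | Sum.inr (Sum.inr (Sum.inr (Sum.inr (Sum.inl i)))), Sum.inl j => (Brᵀ * P) i j
  | _, _ => 0

/-- The congruence-transformed block matrix 𝓜̃ with (1,1) block Y Aᵀ + A Y and
(2,1),(3,1),(4,1),(5,1) blocks Gᵀ, Bvᵀ, Beᵀ, Brᵀ, all other blocks zero. -/
def bigMt (Y A : Matrix (Fin n) (Fin n) ℝ) (G : Matrix (Fin n) (Fin p) ℝ)
    (Bv : Matrix (Fin n) (Fin q) ℝ) (Be : Matrix (Fin n) (Fin m) ℝ)
    (Br : Matrix (Fin n) (Fin s) ℝ) : Matrix (Idx n p q m s) (Idx n p q m s) ℝ :=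
  Matrix.of fun i j => match i, j with
  | Sum.inl i, Sum.inl j => (Y * Aᵀ + A * Y) i j
  | Sum.inl i, Sum.inr (Sum.inl j) => G i j
  | Sum.inr (Sum.inl i), Sum.inl j => Gᵀ i j
  | Sum.inl i, Sum.inr (Sum.inr (Sum.inl j)) => Bv i j
  | Sum.inr (Sum.inr (Sum.inl i)), Sum.inl j => Bvᵀ i j
  | Sum.inl i, Sum.inr (Sum.inr (Sum.inr (Sum.inl j))) => Be i j
  | Sum.inr (Sum.inr (Sum.inr (Sum.inl i))), Sum.inl j => Beᵀ i j
  | Sum.inl i, Sum.inr (Sum.inr (Sum.inr (Sum.inr (Sum.inl j)))) => Br i j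
  | Sum.inr (Sum.inr (Sum.inr (Sum.inr (Sum.inl i)))), Sum.inl j => Brᵀ i j
  | _, _ => 0

/-- 𝓝 = diag(P, 0, 0, 0, 0, −1). -/
def bigN (P : Matrix (Fin n) (Fin n) ℝ) : Matrix (Idx n p q m s) (Idx n p q m s) ℝ :=
  Matrix.of fun i j => match i, j with
  | Sum.inl i, Sum.inl j => P i j
  | Sum.inr (Sum.inr (Sum.inr (Sum.inr (Sum.inr _)))),
    Sum.inr (Sum.inr (Sum.inr (Sum.inr (Sum.inr _)))) => -1
  | _, _ => 0

/-- S_ω = diag(0, −W_ω, 0, 0, 0, 1). -/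
def Sw (W : Matrix (Fin p) (Fin p) ℝ) : Matrix (Idx n p q m s) (Idx n p q m s) ℝ :=
  Matrix.of fun i j => match i, j with
  | Sum.inr (Sum.inl i), Sum.inr (Sum.inl j) => -W i j
  | Sum.inr (Sum.inr (Sum.inr (Sum.inr (Sum.inr _)))),
    Sum.inr (Sum.inr (Sum.inr (Sum.inr (Sum.inr _)))) => 1
  | _, _ => 0

/-- S_v = diag(0, 0, −W_v, 0, 0, 1). -/
def Sv (W : Matrix (Fin q) (Fin q) ℝ) : Matrix (Idx n p q m s) (Idx n p q m s) ℝ :=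
  Matrix.of fun i j => match i, j with
  | Sum.inr (Sum.inr (Sum.inl i)), Sum.inr (Sum.inr (Sum.inl j)) => -W i j
  | Sum.inr (Sum.inr (Sum.inr (Sum.inr (Sum.inr _)))),
    Sum.inr (Sum.inr (Sum.inr (Sum.inr (Sum.inr _)))) => 1
  | _, _ => 0

/-- S_e = diag(0, 0, 0, −P̄_e, 0, 1). -/
def Se (W : Matrix (Fin m) (Fin m) ℝ) : Matrix (Idx n p q m s) (Idx n p q m s) ℝ :=
  Matrix.of fun i j => match i, j with
  | Sum.inr (Sum.inr (Sum.inr (Sum.inl i))),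
    Sum.inr (Sum.inr (Sum.inr (Sum.inl j))) => -W i j
  | Sum.inr (Sum.inr (Sum.inr (Sum.inr (Sum.inr _)))),
    Sum.inr (Sum.inr (Sum.inr (Sum.inr (Sum.inr _)))) => 1
  | _, _ => 0

/-- S_r = diag(0, 0, 0, 0, −Π, 1). -/
def Sr (W : Matrix (Fin s) (Fin s) ℝ) : Matrix (Idx n p q m s) (Idx n p q m s) ℝ :=
  Matrix.of fun i j => match i, j with
  | Sum.inr (Sum.inr (Sum.inr (Sum.inr (Sum.inl i)))),
    Sum.inr (Sum.inr (Sum.inr (Sum.inr (Sum.inl j)))) => -W i j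
  | Sum.inr (Sum.inr (Sum.inr (Sum.inr (Sum.inr _)))),
    Sum.inr (Sum.inr (Sum.inr (Sum.inr (Sum.inr _)))) => 1
  | _, _ => 0

end

section helpers
variable {n p q m s : ℕ}

theorem quad_bigN (P : Matrix (Fin n) (Fin n) ℝ) (z : Fin n → ℝ) (w : Fin p → ℝ)
    (v : Fin q → ℝ) (e : Fin m → ℝ) (r : Fin s → ℝ) :
    stack z w v e r ⬝ᵥ bigN P *ᵥ stack z w v e r = z ⬝ᵥ P *ᵥ z - 1 := by
  simp [stack, bigN, dotProduct, mulVec, Fintype.sum_sum_type, sub_eq_add_neg]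

theorem quad_Sw (W : Matrix (Fin p) (Fin p) ℝ) (z : Fin n → ℝ) (w : Fin p → ℝ)
    (v : Fin q → ℝ) (e : Fin m → ℝ) (r : Fin s → ℝ) :
    stack z w v e r ⬝ᵥ Sw W *ᵥ stack z w v e r = 1 - w ⬝ᵥ W *ᵥ w := by
  simp [stack, Sw, dotProduct, mulVec, Fintype.sum_sum_type]
  ring

theorem quad_Sv (W : Matrix (Fin q) (Fin q) ℝ) (z : Fin n → ℝ) (w : Fin p → ℝ)
    (v : Fin q → ℝ) (e : Fin m → ℝ) (r : Fin s → ℝ) :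
    stack z w v e r ⬝ᵥ Sv W *ᵥ stack z w v e r = 1 - v ⬝ᵥ W *ᵥ v := by
  simp [stack, Sv, dotProduct, mulVec, Fintype.sum_sum_type]
  ring

theorem quad_Se (W : Matrix (Fin m) (Fin m) ℝ) (z : Fin n → ℝ) (w : Fin p → ℝ)
    (v : Fin q → ℝ) (e : Fin m → ℝ) (r : Fin s → ℝ) :
    stack z w v e r ⬝ᵥ Se W *ᵥ stack z w v e r = 1 - e ⬝ᵥ W *ᵥ e := by
  simp [stack, Se, dotProduct, mulVec, Fintype.sum_sum_type]
  ring

theorem quad_Sr (W : Matrix (Fin s) (Fin s) ℝ) (z : Fin n → ℝ) (w : Fin p → ℝ)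
    (v : Fin q → ℝ) (e : Fin m → ℝ) (r : Fin s → ℝ) :
    stack z w v e r ⬝ᵥ Sr W *ᵥ stack z w v e r = 1 - r ⬝ᵥ W *ᵥ r := by
  simp [stack, Sr, dotProduct, mulVec, Fintype.sum_sum_type]
  ring

theorem quad_bigM (P A : Matrix (Fin n) (Fin n) ℝ) (G : Matrix (Fin n) (Fin p) ℝ)
    (Bv : Matrix (Fin n) (Fin q) ℝ) (Be : Matrix (Fin n) (Fin m) ℝ)
    (Br : Matrix (Fin n) (Fin s) ℝ) (z : Fin n → ℝ) (w : Fin p → ℝ)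
    (v : Fin q → ℝ) (e : Fin m → ℝ) (r : Fin s → ℝ) :
    stack z w v e r ⬝ᵥ bigM P A G Bv Be Br *ᵥ stack z w v e r =
      z ⬝ᵥ (Aᵀ * P + P * A) *ᵥ z + z ⬝ᵥ (P * G) *ᵥ w + z ⬝ᵥ (P * Bv) *ᵥ v
      + z ⬝ᵥ (P * Be) *ᵥ e + z ⬝ᵥ (P * Br) *ᵥ r
      + w ⬝ᵥ (Gᵀ * P) *ᵥ z + v ⬝ᵥ (Bvᵀ * P) *ᵥ z
      + e ⬝ᵥ (Beᵀ * P) *ᵥ z + r ⬝ᵥ (Brᵀ * P) *ᵥ z := by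
  simp only [dotProduct, mulVec, Fintype.sum_sum_type]
  simp [stack, bigM, mul_add, Finset.sum_add_distrib]
  ring

theorem quad_swap {k : ℕ} (P : Matrix (Fin n) (Fin n) ℝ) (hP : Pᵀ = P)
    (B : Matrix (Fin n) (Fin k) ℝ) (z : Fin n → ℝ) (x : Fin k → ℝ) :
    x ⬝ᵥ (Bᵀ * P) *ᵥ z = z ⬝ᵥ P *ᵥ (B *ᵥ x) := by
  have h : Bᵀ * P = (P * B)ᵀ := by rw [transpose_mul, hP]
  rw [h, mulVec_transpose, dotProduct_comm, ← dotProduct_mulVec, mulVec_mulVec]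

end helpers

/-- Feasibility of the S-procedure LMI implies the Lyapunov decrease
inequality 2 ζᵀ P (Aζ + Gω + B_v v + B_e ē + B_r r) ≤ α (1 − ζᵀ P ζ) for all ζ and all
disturbances inside their ellipsoids. -/
theorem stmt2 {n p q m s : ℕ}
    (P A : Matrix (Fin n) (Fin n) ℝ) (hP : P.PosDef)
    (G : Matrix (Fin n) (Fin p) ℝ) (Bv : Matrix (Fin n) (Fin q) ℝ)
    (Be : Matrix (Fin n) (Fin m) ℝ) (Br : Matrix (Fin n) (Fin s) ℝ)
    (Wω : Matrix (Fin p) (Fin p) ℝ) (hWω : Wω.PosDef)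
    (Wv : Matrix (Fin q) (Fin q) ℝ) (hWv : Wv.PosDef)
    (Pe : Matrix (Fin m) (Fin m) ℝ) (hPe : Pe.PosDef)
    (Pim : Matrix (Fin s) (Fin s) ℝ) (hPim : Pim.PosDef)
    (α βω βv βe βr : ℝ) (hα : 0 ≤ α) (hβω : 0 ≤ βω) (hβv : 0 ≤ βv)
    (hβe : 0 ≤ βe) (hβr : 0 ≤ βr)
    (hLMI : (-(bigM P A G Bv Be Br) - α • bigN P - βω • Sw Wω - βv • Sv Wv
              - βe • Se Pe - βr • Sr Pim).PosSemidef)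
    (ζ : Fin n → ℝ) (ω : Fin p → ℝ) (v : Fin q → ℝ) (e : Fin m → ℝ) (r : Fin s → ℝ)
    (hω : ω ⬝ᵥ Wω *ᵥ ω ≤ 1) (hv : v ⬝ᵥ Wv *ᵥ v ≤ 1)
    (he : e ⬝ᵥ Pe *ᵥ e ≤ 1) (hr : r ⬝ᵥ Pim *ᵥ r ≤ 1) :
    2 * (ζ ⬝ᵥ P *ᵥ (A *ᵥ ζ + G *ᵥ ω + Bv *ᵥ v + Be *ᵥ e + Br *ᵥ r))
      ≤ α * (1 - ζ ⬝ᵥ P *ᵥ ζ) := by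
  have hPT : Pᵀ = P := by
    rw [← conjTranspose_eq_transpose_of_trivial]; exact hP.isHermitian.eq
  have h := hLMI.dotProduct_mulVec_nonneg (stack ζ ω v e r)
  simp only [star_trivial, sub_mulVec, neg_mulVec, smul_mulVec, dotProduct_sub,
    dotProduct_neg, dotProduct_smul, smul_eq_mul, quad_bigN, quad_Sw, quad_Sv, quad_Se,
    quad_Sr, quad_bigM, quad_swap P hPT, add_mulVec, dotProduct_add] at h
  simp only [← mulVec_mulVec] at h
  simp only [mulVec_add, dotProduct_add]
  have h1 := mul_nonneg hβω (sub_nonneg.2 hω)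
  have h2 := mul_nonneg hβv (sub_nonneg.2 hv)
  have h3 := mul_nonneg hβe (sub_nonneg.2 he)
  have h4 := mul_nonneg hβr (sub_nonneg.2 hr)
  linarith
end

section
/- Suppose there exist a symmetric positive definite n×n matrix Y, a constant α > 0, and constants β_ω, β_v, β_e, β_r ≥ 0 satisfying the LMI −𝓜̃ − α 𝓝̃ − β_ω S_ω − β_v S_v − β_e S_e − β_r S_r ⪰ 0, with 𝓜̃ the symmetric block matrix of size n+p+q+m+s+1 with (1,1) block Y Aᵀ + A Y, (2,1) block Gᵀ, (3,1) block B_vᵀ, (4,1) block B_eᵀ, (5,1) block B_rᵀ, all other blocks zero; 𝓝̃ = diag(Y, 0, 0, 0, 0, −1); S_ω = diag(0, −W_ω, 0, 0, 0, 1); S_v = diag(0, 0, −W_v, 0, 0, 1); S_e = diag(0, 0, 0, −P̄_e, 0, 1); S_r = diag(0, 0, 0, 0, −Π, 1). Then, with P = Y⁻¹, every differentiable trajectory of the closed-loop system under admissible disturbances satisfies ζ(t)ᵀ P ζ(t) ≤ 1 + (ζ(0)ᵀ P ζ(0) − 1) e^{−α t} for all t ≥ 0; in particular, the infinite-time reachable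 set from any initial condition is contained in every open neighborhood of the ellipsoid ℰ = {ζ : ζᵀ P ζ ≤ 1}, i.e., limsup_{t→∞} ζ(t)ᵀ P ζ(t) ≤ 1. -/
open Matrix MeasureTheory Filter

theorem quadMt {n p q m s : ℕ} (Y A : Matrix (Fin n) (Fin n) ℝ)
    (G : Matrix (Fin n) (Fin p) ℝ) (Bv : Matrix (Fin n) (Fin q) ℝ)
    (Be : Matrix (Fin n) (Fin m) ℝ) (Br : Matrix (Fin n) (Fin s) ℝ)
    (x : Fin n → ℝ) (w : Fin p → ℝ) (v : Fin q → ℝ) (e : Fin m → ℝ) (r : Fin s → ℝ) :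
    stack x w v e r ⬝ᵥ bigMt Y A G Bv Be Br *ᵥ stack x w v e r =
      x ⬝ᵥ (Y * Aᵀ + A * Y) *ᵥ x + x ⬝ᵥ G *ᵥ w + x ⬝ᵥ Bv *ᵥ v + x ⬝ᵥ Be *ᵥ e + x ⬝ᵥ Br *ᵥ r
      + w ⬝ᵥ Gᵀ *ᵥ x + v ⬝ᵥ Bvᵀ *ᵥ x + e ⬝ᵥ Beᵀ *ᵥ x + r ⬝ᵥ Brᵀ *ᵥ x := by
  simp only [dotProduct, mulVec, Fintype.sum_sum_type, stack, bigMt, Matrix.of_apply,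
    Sum.elim_inl, Sum.elim_inr, zero_mul, Finset.sum_const_zero, add_zero, mul_zero,
    mul_add, Finset.sum_add_distrib]
  ring

theorem quadN {n p q m s : ℕ} (Y : Matrix (Fin n) (Fin n) ℝ)
    (x : Fin n → ℝ) (w : Fin p → ℝ) (v : Fin q → ℝ) (e : Fin m → ℝ) (r : Fin s → ℝ) :
    stack x w v e r ⬝ᵥ bigN Y *ᵥ stack x w v e r = x ⬝ᵥ Y *ᵥ x - 1 := by
  simp [dotProduct, mulVec, Fintype.sum_sum_type, stack, bigN, sub_eq_add_neg]

set_option maxHeartbeats 2000000 in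
theorem quadSw {n p q m s : ℕ} (W : Matrix (Fin p) (Fin p) ℝ)
    (x : Fin n → ℝ) (w : Fin p → ℝ) (v : Fin q → ℝ) (e : Fin m → ℝ) (r : Fin s → ℝ) :
    stack x w v e r ⬝ᵥ Sw W *ᵥ stack x w v e r = 1 - w ⬝ᵥ W *ᵥ w := by
  simp [dotProduct, mulVec, Fintype.sum_sum_type, stack, Sw, sub_eq_add_neg, add_comm]

set_option maxHeartbeats 2000000 in
theorem quadSv {n p q m s : ℕ} (W : Matrix (Fin q) (Fin q) ℝ)
    (x : Fin n → ℝ) (w : Fin p → ℝ) (v : Fin q → ℝ) (e : Fin m → ℝ) (r : Fin s → ℝ) :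
    stack x w v e r ⬝ᵥ Sv W *ᵥ stack x w v e r = 1 - v ⬝ᵥ W *ᵥ v := by
  simp [dotProduct, mulVec, Fintype.sum_sum_type, stack, Sv, sub_eq_add_neg, add_comm]

set_option maxHeartbeats 2000000 in
theorem quadSe {n p q m s : ℕ} (W : Matrix (Fin m) (Fin m) ℝ)
    (x : Fin n → ℝ) (w : Fin p → ℝ) (v : Fin q → ℝ) (e : Fin m → ℝ) (r : Fin s → ℝ) :
    stack x w v e r ⬝ᵥ Se W *ᵥ stack x w v e r = 1 - e ⬝ᵥ W *ᵥ e := by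
  simp [dotProduct, mulVec, Fintype.sum_sum_type, stack, Se, sub_eq_add_neg, add_comm]

set_option maxHeartbeats 2000000 in
theorem quadSr {n p q m s : ℕ} (W : Matrix (Fin s) (Fin s) ℝ)
    (x : Fin n → ℝ) (w : Fin p → ℝ) (v : Fin q → ℝ) (e : Fin m → ℝ) (r : Fin s → ℝ) :
    stack x w v e r ⬝ᵥ Sr W *ᵥ stack x w v e r = 1 - r ⬝ᵥ W *ᵥ r := by
  simp [dotProduct, mulVec, Fintype.sum_sum_type, stack, Sr, sub_eq_add_neg, add_comm]

theorem dot_transpose {a b : ℕ} (M : Matrix (Fin a) (Fin b) ℝ) (x : Fin a → ℝ) (w : Fin b → ℝ) :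
    w ⬝ᵥ Mᵀ *ᵥ x = x ⬝ᵥ M *ᵥ w := by
  rw [Matrix.mulVec_transpose, dotProduct_comm, Matrix.dotProduct_mulVec]

open Filter in
/-- **exponential convergence into the ellipsoid.** If Y ≻ 0, α > 0 and the
linearized LMI is feasible, then with P = Y⁻¹ every admissible trajectory satisfies
ζ(t)ᵀ P ζ(t) ≤ 1 + (ζ(0)ᵀ P ζ(0) − 1) e^{−αt} for all t ≥ 0, and in particular
limsup_{t→∞} ζ(t)ᵀ P ζ(t) ≤ 1. -/
theorem stmt6 {n p q m s : ℕ}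
    (A : Matrix (Fin n) (Fin n) ℝ)
    (G : Matrix (Fin n) (Fin p) ℝ) (Bv : Matrix (Fin n) (Fin q) ℝ)
    (Be : Matrix (Fin n) (Fin m) ℝ) (Br : Matrix (Fin n) (Fin s) ℝ)
    (Wω : Matrix (Fin p) (Fin p) ℝ) (hWω : Wω.PosDef)
    (Wv : Matrix (Fin q) (Fin q) ℝ) (hWv : Wv.PosDef)
    (Pe : Matrix (Fin m) (Fin m) ℝ) (hPe : Pe.PosDef)
    (Pim : Matrix (Fin s) (Fin s) ℝ) (hPim : Pim.PosDef)
    (Y : Matrix (Fin n) (Fin n) ℝ) (hY : Y.PosDef)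
    (α βω βv βe βr : ℝ) (hα : 0 < α) (hβω : 0 ≤ βω) (hβv : 0 ≤ βv)
    (hβe : 0 ≤ βe) (hβr : 0 ≤ βr)
    (hLMI : (-(bigMt Y A G Bv Be Br) - α • bigN Y - βω • Sw Wω - βv • Sv Wv
              - βe • Se Pe - βr • Sr Pim).PosSemidef)
    (ζ : ℝ → Fin n → ℝ) (ω : ℝ → Fin p → ℝ) (v : ℝ → Fin q → ℝ)
    (e : ℝ → Fin m → ℝ) (r : ℝ → Fin s → ℝ)
    (hdyn : ∀ t ∈ Set.Ici (0:ℝ), HasDerivAt ζ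
      (A *ᵥ ζ t + G *ᵥ ω t + Bv *ᵥ v t + Be *ᵥ e t + Br *ᵥ r t) t)
    (hω : ∀ t ∈ Set.Ici (0:ℝ), ω t ⬝ᵥ Wω *ᵥ ω t ≤ 1)
    (hv : ∀ t ∈ Set.Ici (0:ℝ), v t ⬝ᵥ Wv *ᵥ v t ≤ 1)
    (he : ∀ t ∈ Set.Ici (0:ℝ), e t ⬝ᵥ Pe *ᵥ e t ≤ 1)
    (hr : ∀ t ∈ Set.Ici (0:ℝ), r t ⬝ᵥ Pim *ᵥ r t ≤ 1) :
    (∀ t ∈ Set.Ici (0:ℝ), ζ t ⬝ᵥ Y⁻¹ *ᵥ ζ t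
        ≤ 1 + (ζ 0 ⬝ᵥ Y⁻¹ *ᵥ ζ 0 - 1) * Real.exp (-α * t)) ∧
      limsup (fun t => ζ t ⬝ᵥ Y⁻¹ *ᵥ ζ t) atTop ≤ 1 := by
  have hdet : IsUnit Y.det := (Matrix.isUnit_iff_isUnit_det Y).mp hY.isUnit
  have hYt : Yᵀ = Y := by simpa using hY.isHermitian.eq
  have hPt : (Y⁻¹)ᵀ = Y⁻¹ := by rw [Matrix.transpose_nonsing_inv, hYt]
  have hYP : ∀ z : Fin n → ℝ, Y *ᵥ (Y⁻¹ *ᵥ z) = z := fun z => by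
    rw [Matrix.mulVec_mulVec, Matrix.mul_nonsing_inv _ hdet, Matrix.one_mulVec]
  have hder : ∀ t ∈ Set.Ici (0:ℝ), HasDerivAt (fun t => ζ t ⬝ᵥ Y⁻¹ *ᵥ ζ t)
      (2 * ((Y⁻¹ *ᵥ ζ t) ⬝ᵥ (A *ᵥ ζ t + G *ᵥ ω t + Bv *ᵥ v t + Be *ᵥ e t + Br *ᵥ r t))) t := by
    intro t ht
    have h := hdyn t ht
    set D := A *ᵥ ζ t + G *ᵥ ω t + Bv *ᵥ v t + Be *ᵥ e t + Br *ᵥ r t with hD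
    have hc := hasDerivAt_pi.mp h
    have h2 : ∀ i, HasDerivAt (fun t => (Y⁻¹ *ᵥ ζ t) i) ((Y⁻¹ *ᵥ D) i) t := fun i => by
      simp only [Matrix.mulVec, dotProduct]
      exact HasDerivAt.fun_sum fun j _ => (hc j).const_mul _
    have h3 : HasDerivAt (fun t => ζ t ⬝ᵥ Y⁻¹ *ᵥ ζ t)
        (D ⬝ᵥ Y⁻¹ *ᵥ ζ t + ζ t ⬝ᵥ Y⁻¹ *ᵥ D) t := by
      simp only [dotProduct, ← Finset.sum_add_distrib]
      exact HasDerivAt.fun_sum fun j _ => (hc j).mul (h2 j)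
    convert h3 using 1
    have e1 := dot_transpose Y⁻¹ D (ζ t)
    rw [hPt] at e1
    rw [e1, dotProduct_comm D]
    ring
  have hbd : ∀ t ∈ Set.Ici (0:ℝ),
      2 * ((Y⁻¹ *ᵥ ζ t) ⬝ᵥ (A *ᵥ ζ t + G *ᵥ ω t + Bv *ᵥ v t + Be *ᵥ e t + Br *ᵥ r t))
        ≤ -α * (ζ t ⬝ᵥ Y⁻¹ *ᵥ ζ t - 1) := by
    intro t ht
    have h := hLMI.dotProduct_mulVec_nonneg (stack (Y⁻¹ *ᵥ ζ t) (ω t) (v t) (e t) (r t))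
    simp only [star_trivial, Matrix.sub_mulVec, Matrix.neg_mulVec, Matrix.smul_mulVec,
      dotProduct_sub, dotProduct_neg, dotProduct_smul, quadMt, quadN, quadSw, quadSv, quadSe,
      quadSr, dot_transpose, smul_eq_mul, Matrix.add_mulVec, dotProduct_add] at h
    have e1 : (Y⁻¹ *ᵥ ζ t) ⬝ᵥ (A * Y) *ᵥ (Y⁻¹ *ᵥ ζ t) = (Y⁻¹ *ᵥ ζ t) ⬝ᵥ A *ᵥ ζ t := by
      rw [← Matrix.mulVec_mulVec, hYP]
    have e2 : (Y⁻¹ *ᵥ ζ t) ⬝ᵥ (Y * Aᵀ) *ᵥ (Y⁻¹ *ᵥ ζ t) = (Y⁻¹ *ᵥ ζ t) ⬝ᵥ A *ᵥ ζ t := by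
      have : Y * Aᵀ = (A * Y)ᵀ := by rw [Matrix.transpose_mul, hYt]
      rw [this, dot_transpose, e1]
    rw [e1, e2, hYP, dotProduct_comm _ (ζ t)] at h
    simp only [dotProduct_add]
    have k1 := mul_nonneg hβω (sub_nonneg.mpr (hω t ht))
    have k2 := mul_nonneg hβv (sub_nonneg.mpr (hv t ht))
    have k3 := mul_nonneg hβe (sub_nonneg.mpr (he t ht))
    have k4 := mul_nonneg hβr (sub_nonneg.mpr (hr t ht))
    have k5 := dotProduct_comm (Y⁻¹ *ᵥ ζ t) (A *ᵥ ζ t)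
    linarith
  have main : ∀ t ∈ Set.Ici (0:ℝ), ζ t ⬝ᵥ Y⁻¹ *ᵥ ζ t
        ≤ 1 + (ζ 0 ⬝ᵥ Y⁻¹ *ᵥ ζ 0 - 1) * Real.exp (-α * t) := by
    have hg : ∀ t ∈ Set.Ici (0:ℝ), HasDerivAt
        (fun t => (ζ t ⬝ᵥ Y⁻¹ *ᵥ ζ t - 1) * Real.exp (α * t))
        ((2 * ((Y⁻¹ *ᵥ ζ t) ⬝ᵥ (A *ᵥ ζ t + G *ᵥ ω t + Bv *ᵥ v t + Be *ᵥ e t + Br *ᵥ r t)))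
          * Real.exp (α * t) + (ζ t ⬝ᵥ Y⁻¹ *ᵥ ζ t - 1) * (Real.exp (α * t) * (α * 1))) t :=
      fun t ht => ((hder t ht).sub_const 1).mul (((hasDerivAt_id t).const_mul α).exp)
    have hanti : AntitoneOn (fun t => (ζ t ⬝ᵥ Y⁻¹ *ᵥ ζ t - 1) * Real.exp (α * t))
        (Set.Ici (0:ℝ)) := by
      apply antitoneOn_of_deriv_nonpos (convex_Ici 0)
      · exact fun t ht => (hg t ht).continuousAt.continuousWithinAt
      · intro t ht
        exact (hg t (interior_subset ht)).differentiableAt.differentiableWithinAt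
      · intro t ht
        rw [(hg t (interior_subset ht)).deriv]
        have := mul_le_mul_of_nonneg_right (hbd t (interior_subset ht)) (Real.exp_pos (α * t)).le
        linarith
    intro t ht
    have h := hanti (Set.mem_Ici.mpr le_rfl) ht ht
    simp only [mul_zero, Real.exp_zero, mul_one] at h
    have h2 := mul_le_mul_of_nonneg_right h (Real.exp_pos (-α * t)).le
    rw [mul_assoc, ← Real.exp_add] at h2
    have : α * t + -α * t = 0 := by ring
    rw [this, Real.exp_zero] at h2
    linarith
  refine ⟨main, ?_⟩
  have hlim : Tendsto (fun t => 1 + (ζ 0 ⬝ᵥ Y⁻¹ *ᵥ ζ 0 - 1) * Real.exp (-α * t)) atTop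
      (nhds 1) := by
    have h1 : Tendsto (fun t : ℝ => Real.exp (-α * t)) atTop (nhds 0) :=
      Real.tendsto_exp_atBot.comp (tendsto_id.const_mul_atTop_of_neg (neg_lt_zero.mpr hα))
    simpa using (h1.const_mul (ζ 0 ⬝ᵥ Y⁻¹ *ᵥ ζ 0 - 1)).const_add 1
  have hnn : ∀ t, 0 ≤ ζ t ⬝ᵥ Y⁻¹ *ᵥ ζ t := fun t => by
    simpa using hY.inv.posSemidef.dotProduct_mulVec_nonneg (ζ t)
  rw [← hlim.limsup_eq]
  refine limsup_le_limsup ?_ ?_ hlim.isBoundedUnder_le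
  · filter_upwards [eventually_ge_atTop (0:ℝ)] with t ht using main t ht
  · exact IsBoundedUnder.isCoboundedUnder_le ⟨0, by simp [hnn]⟩
end
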